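/- arXiv:1411.6779 — 2 statements merged into one kernel-verified Lean document; each statement's English description precedes it below -/
import Mathlib

section
/- Let X be a CAT(0) space and T₁, T₂ : X → X satisfy property (P₂). If Fix(T₂ ∘ T₁) ≠ ∅, then for any x₀ ∈ X the sequences given by d(y_n, T₁x_n) ≤ ε_n and d(x_{n+1}, T₂y_n) ≤ δ_n (with Σε_n < ∞, Σδ_n < ∞) are asymptotically regular: lim d(x_n, x_{n+1}) = 0 and lim d(y_n, y_{n+1}) = 0. -/
open Filter Topology Metric Set

/-- A (chosen) geodesic bicombing witnessing that `X` is a geodesic space: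
`geo x y t` is the point at parameter fraction `t ∈ [0,1]` on a geodesic from `x` to `y`. -/
structure Geodesic (X : Type*) [MetricSpace X] where
  geo : X → X → ℝ → X
  geo_zero : ∀ x y, geo x y 0 = x
  geo_one : ∀ x y, geo x y 1 = y
  geo_dist : ∀ x y : X, ∀ s ∈ Set.Icc (0:ℝ) 1, ∀ t ∈ Set.Icc (0:ℝ) 1,
    dist (geo x y s) (geo x y t) = |s - t| * dist x y

/-- The CN (Bruhat–Tits) inequality characterizing CAT(0) among geodesic spaces. -/
def CAT0 (X : Type*) [MetricSpace X] : Prop :=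
  ∀ x y z m : X, dist x m = dist x y / 2 → dist y m = dist x y / 2 →
    dist z m ^ 2 ≤ dist z x ^ 2 / 2 + dist z y ^ 2 / 2 - dist x y ^ 2 / 4

/-- Property (P₂). -/
def PropP2 {X : Type*} [MetricSpace X] (T : X → X) : Prop :=
  ∀ x y : X, 2 * dist (T x) (T y) ^ 2 ≤
    dist x (T y) ^ 2 + dist y (T x) ^ 2 - dist x (T x) ^ 2 - dist y (T y) ^ 2


lemma weak_quad {X : Type*} [MetricSpace X] (G : Geodesic X) (hX : CAT0 X) (x y u v : X) :
    dist x v ^ 2 + dist y u ^ 2 ≤ dist x u ^ 2 + dist y v ^ 2 + dist x y ^ 2 + dist u v ^ 2 := by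
  have e0 : (0:ℝ) ∈ Set.Icc (0:ℝ) 1 := by constructor <;> norm_num
  have e1 : (1:ℝ) ∈ Set.Icc (0:ℝ) 1 := by constructor <;> norm_num
  have eh : (1/2:ℝ) ∈ Set.Icc (0:ℝ) 1 := by constructor <;> norm_num
  have h1 := G.geo_dist x v 0 e0 (1/2) eh
  have h2 := G.geo_dist x v 1 e1 (1/2) eh
  rw [G.geo_zero] at h1
  rw [G.geo_one] at h2
  have a1 : |(0:ℝ) - 1/2| = 1/2 := by rw [abs_of_nonpos] <;> norm_num
  have a2 : |(1:ℝ) - 1/2| = 1/2 := by rw [abs_of_nonneg] <;> norm_num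
  rw [a1] at h1
  rw [a2] at h2
  generalize G.geo x v (1/2) = m at *
  have k1 := hX x v y m (by linarith) (by linarith)
  have k2 := hX x v u m (by linarith) (by linarith)
  have t := dist_triangle_right y u m
  have t2 : dist y u ^ 2 ≤ (dist y m + dist u m)^2 := by
    have := dist_nonneg (x := y) (y := u)
    gcongr
  rw [dist_comm u x] at k2
  rw [dist_comm y x] at k1
  nlinarith [sq_nonneg (dist y m - dist u m)]

/-- Subdivision of a segment. -/
lemma subdiv {X : Type*} [MetricSpace X] (G : Geodesic X) (x y : X) (p : ℕ) (hp : 0 < p) :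
    ∃ w : ℕ → X, w 0 = x ∧ w p = y ∧ ∀ i < p, dist (w i) (w (i+1)) = dist x y / p := by
  have hp' : (0:ℝ) < p := by exact_mod_cast hp
  refine ⟨fun i => G.geo x y ((i:ℝ)/p), ?_, ?_, ?_⟩
  · simp [G.geo_zero]
  · simp [div_self hp'.ne', G.geo_one]
  · intro i hi
    have hi' : (i:ℝ) + 1 ≤ p := by exact_mod_cast hi
    have h0 : (0:ℝ) ≤ i := Nat.cast_nonneg i
    dsimp only
    rw [G.geo_dist]
    · push_cast
      have : (i:ℝ)/p - (i+1)/p = -(1/p) := by ring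
      rw [this, abs_neg, abs_of_nonneg (by positivity)]
      ring
    · exact ⟨by positivity, by rw [div_le_one hp']; linarith⟩
    · push_cast
      exact ⟨by positivity, by rw [div_le_one hp']; linarith⟩

lemma quad_one {X : Type*} [MetricSpace X] (G : Geodesic X) (hX : CAT0 X) (x y u v : X)
    (p : ℕ) (hp : 0 < p) :
    dist x v ^ 2 + dist y u ^ 2 ≤ dist x u ^ 2 + dist y v ^ 2 + dist x y ^ 2 / p
      + p * dist u v ^ 2 := by
  obtain ⟨w, w0, wp, hw⟩ := subdiv G x y p hp
  have hp' : (0:ℝ) < p := by exact_mod_cast hp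
  have key : ∀ i ≤ p, dist x v ^ 2 + dist (w i) u ^ 2 ≤ dist x u ^ 2 + dist (w i) v ^ 2
      + i * ((dist x y / p)^2 + dist u v ^ 2) := by
    intro i
    induction i with
    | zero => intro _; rw [w0]; simp; linarith
    | succ i ih =>
      intro hi
      have h1 := ih (by omega)
      have h2 := weak_quad G hX (w i) (w (i+1)) u v
      rw [hw i (by omega)] at h2
      push_cast
      linarith
  have := key p le_rfl
  rw [wp] at this
  have e : (p:ℝ) * ((dist x y / p)^2 + dist u v ^ 2) = dist x y ^ 2 / p + p * dist u v ^ 2 := by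
    field_simp
  linarith

lemma quad_two {X : Type*} [MetricSpace X] (G : Geodesic X) (hX : CAT0 X) (x y u v : X)
    (p q : ℕ) (hp : 0 < p) (hq : 0 < q) :
    dist x v ^ 2 + dist y u ^ 2 ≤ dist x u ^ 2 + dist y v ^ 2 + (q / p : ℝ) * dist x y ^ 2
      + (p / q : ℝ) * dist u v ^ 2 := by
  obtain ⟨w, w0, wp, hw⟩ := subdiv G u v q hq
  have hp' : (0:ℝ) < p := by exact_mod_cast hp
  have hq' : (0:ℝ) < q := by exact_mod_cast hq
  have key : ∀ i ≤ q, dist x (w i) ^ 2 + dist y u ^ 2 ≤ dist x u ^ 2 + dist y (w i) ^ 2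
      + i * (dist x y ^ 2 / p + p * (dist u v / q) ^ 2) := by
    intro i
    induction i with
    | zero => intro _; rw [w0]; simp
    | succ i ih =>
      intro hi
      have h1 := ih (by omega)
      have h2 := quad_one G hX x y (w i) (w (i+1)) p hp
      rw [hw i (by omega)] at h2
      push_cast
      linarith
  have := key q le_rfl
  rw [wp] at this
  have e : (q:ℝ) * (dist x y ^ 2 / p + p * (dist u v / q) ^ 2)
      = (q / p : ℝ) * dist x y ^ 2 + (p / q : ℝ) * dist u v ^ 2 := by
    field_simp
  linarith

lemma p2_nonexp {X : Type*} [MetricSpace X] (G : Geodesic X) (hX : CAT0 X) (T : X → X)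
    (h : PropP2 T) (x y : X) : dist (T x) (T y) ≤ dist x y := by
  have h1 := h x y
  have h2 := weak_quad G hX x y (T x) (T y)
  have : dist (T x) (T y) ^ 2 ≤ dist x y ^ 2 := by linarith
  exact (sq_le_sq₀ dist_nonneg dist_nonneg).1 this

open BoundedContinuousFunction in
/-- Banach limits. -/
lemma exists_banach_limit : ∃ L : (ℕ →ᵇ ℝ) →ₗ[ℝ] ℝ,
    (∀ f g : ℕ →ᵇ ℝ, (∀ n, f n ≤ g n) → L f ≤ L g) ∧
    (∀ f g : ℕ →ᵇ ℝ, (∀ n, g n = f (n+1)) → L g = L f) ∧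
    (∀ (f : ℕ →ᵇ ℝ) (r : ℝ), (∀ n, f n = r) → L f = r) := by
  let av : (ℕ →ᵇ ℝ) → ℕ → ℝ := fun f N => (∑ n ∈ Finset.range N, f n) / N
  have hU : (hyperfilter ℕ : Filter ℕ) ≤ atTop := by
    rw [← Nat.cofinite_eq_atTop]; exact hyperfilter_le_cofinite
  have hbd : ∀ f N, av f N ∈ Set.Icc (-‖f‖) ‖f‖ := by
    intro f N
    rw [Set.mem_Icc, ← abs_le]
    rcases Nat.eq_zero_or_pos N with h | h
    · simp [av, h]
    · have hN : (0:ℝ) < N := by exact_mod_cast h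
      simp only [av]
      rw [abs_div, abs_of_pos hN, div_le_iff₀ hN]
      calc |∑ n ∈ Finset.range N, f n| ≤ ∑ n ∈ Finset.range N, |f n| :=
            Finset.abs_sum_le_sum_abs _ _
        _ ≤ ∑ n ∈ Finset.range N, ‖f‖ := Finset.sum_le_sum fun n _ => f.norm_coe_le_norm n
        _ = ‖f‖ * N := by simp [mul_comm]
  have hex : ∀ f, ∃ l, Tendsto (av f) (hyperfilter ℕ : Filter ℕ) (𝓝 l) := by
    intro f
    obtain ⟨l, _, hl⟩ := (isCompact_Icc (a := -‖f‖) (b := ‖f‖)).ultrafilter_le_nhds'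
      ((hyperfilter ℕ).map (av f)) (by
        rw [Ultrafilter.mem_map]
        exact Filter.univ_mem' (hbd f))
    exact ⟨l, hl⟩
  choose L hL using hex
  refine ⟨{ toFun := L, map_add' := ?_, map_smul' := ?_ }, ?_, ?_, ?_⟩
  · intro f g
    refine tendsto_nhds_unique (hL (f+g)) (((hL f).add (hL g)).congr fun N => ?_)
    simp [av, Finset.sum_add_distrib, add_div]
  · intro r f
    refine tendsto_nhds_unique (hL (r • f)) (((hL f).const_mul r).congr fun N => ?_)
    simp [av]
    simp [← Finset.mul_sum, mul_div_assoc]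
  · intro f g h
    refine le_of_tendsto_of_tendsto' (hL f) (hL g) fun N => ?_
    simp only [av]
    gcongr
    exact h _
  · intro f g h
    have h0 : Tendsto (fun N : ℕ => (f N - f 0) / N) (hyperfilter ℕ : Filter ℕ) (𝓝 0) := by
      refine Tendsto.mono_left ?_ hU
      refine squeeze_zero_norm (a := fun N : ℕ => (2 * ‖f‖) / N) (fun N => ?_)
        (tendsto_const_div_atTop_nhds_zero_nat _)
      rw [norm_div, Real.norm_natCast]
      gcongr
      have h1 := f.norm_coe_le_norm N
      have h2 := f.norm_coe_le_norm 0
      have := norm_sub_le (f N) (f 0)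
      linarith
    have h1 := (hL f).add h0
    rw [add_zero] at h1
    refine tendsto_nhds_unique (hL g) (h1.congr fun N => ?_)
    simp only [av]
    rw [← add_div]
    congr 1
    simp only [h]
    have a1 := Finset.sum_range_succ (fun n => f n) N
    have a2 := Finset.sum_range_succ' (fun n => f n) N
    linarith
  · intro f r h
    refine tendsto_nhds_unique (hL f) (Tendsto.mono_left ?_ hU)
    refine tendsto_const_nhds.congr' ?_
    filter_upwards [eventually_gt_atTop 0] with N hN
    have hN : (0:ℝ) < N := by exact_mod_cast hN
    simp only [av, h]
    simp
    field_simp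

open BoundedContinuousFunction in
lemma exact_regular {X : Type*} [MetricSpace X] (G : Geodesic X) (hX : CAT0 X)
    (T₁ T₂ : X → X) (h₁ : PropP2 T₁) (h₂ : PropP2 T₂)
    (u : X) (hu : T₂ (T₁ u) = u) (x y : ℕ → X)
    (hy : ∀ n, T₁ (x n) = y n) (hx : ∀ n, T₂ (y n) = x (n+1)) :
    Tendsto (fun n => dist (x n) (x (n + 1))) atTop (𝓝 0) := by
  have n1 := p2_nonexp G hX T₁ h₁
  have n2 := p2_nonexp G hX T₂ h₂
  have hyx : ∀ n m, dist (y n) (y m) ≤ dist (x n) (x m) := fun n m => by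
    rw [← hy, ← hy]; exact n1 _ _
  have hxy : ∀ n m, dist (x (n+1)) (x (m+1)) ≤ dist (y n) (y m) := fun n m => by
    rw [← hx, ← hx]; exact n2 _ _
  -- boundedness
  have bx : ∀ n, dist (x n) u ≤ dist (x 0) u := by
    intro n
    induction n with
    | zero => exact le_rfl
    | succ n ih =>
      have a := n2 (y n) (T₁ u)
      have b := n1 (x n) u
      rw [hx, hu] at a
      rw [hy] at b
      linarith
  have bdy : ∀ n, dist (y n) (T₁ u) ≤ dist (x 0) u := by
    intro n
    have b := n1 (x n) u
    rw [hy] at b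
    linarith [bx n]
  set M : ℝ := 2 * dist (x 0) u + dist u (T₁ u) with hM
  have hM0 : 0 ≤ M := by positivity
  have bxx : ∀ n m, dist (x n) (x m) ≤ M := fun n m => by
    have := dist_triangle_right (x n) (x m) u
    linarith [bx n, bx m, dist_nonneg (x := u) (y := T₁ u)]
  have byy : ∀ n m, dist (y n) (y m) ≤ M := fun n m => (hyx n m).trans (bxx n m)
  have bxy : ∀ n m, dist (x n) (y m) ≤ M := fun n m => by
    have := dist_triangle4_right (x n) (y m) u (T₁ u)
    linarith [bx n, bdy m]
  have mk : ∀ f : ℕ → ℝ, (∀ n, 0 ≤ f n ∧ f n ≤ M) → ∃ g : ℕ →ᵇ ℝ, ∀ n, g n = f n ^ 2 := by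
    intro f hf
    refine ⟨BoundedContinuousFunction.ofNormedAddCommGroupDiscrete (fun n => f n ^ 2) (M^2) ?_,
      fun n => rfl⟩
    intro n
    rw [Real.norm_of_nonneg (sq_nonneg _)]
    exact pow_le_pow_left₀ (hf n).1 (hf n).2 2
  have hc : ∀ i j : ℕ, ∃ g : ℕ →ᵇ ℝ, ∀ n, g n = dist (x (n+i)) (y (n+j)) ^ 2 :=
    fun i j => mk _ fun n => ⟨dist_nonneg, bxy _ _⟩
  have ha : ∀ i j : ℕ, ∃ g : ℕ →ᵇ ℝ, ∀ n, g n = dist (x (n+i)) (x (n+j)) ^ 2 :=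
    fun i j => mk _ fun n => ⟨dist_nonneg, bxx _ _⟩
  have hb : ∀ i j : ℕ, ∃ g : ℕ →ᵇ ℝ, ∀ n, g n = dist (y (n+i)) (y (n+j)) ^ 2 :=
    fun i j => mk _ fun n => ⟨dist_nonneg, byy _ _⟩
  choose c hc using hc
  choose a ha using ha
  choose b hb using hb
  obtain ⟨L, Lmono, Lshift, Lconst⟩ := exists_banach_limit
  have hFs : ∀ i j, L (c (i+1) (j+1)) = L (c i j) := fun i j => Lshift _ _ fun n => by
    rw [hc, hc, show n + (i+1) = n+1+i by ring, show n + (j+1) = n+1+j by ring]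
  have hFs' : ∀ k i j, L (c (i+k) (j+k)) = L (c i j) := by
    intro k i j
    induction k with
    | zero => rfl
    | succ k ih => rw [← ih]; exact hFs (i+k) (j+k)
  have has : ∀ i j, L (a (i+1) (j+1)) = L (a i j) := fun i j => Lshift _ _ fun n => by
    rw [ha, ha, show n + (i+1) = n+1+i by ring, show n + (j+1) = n+1+j by ring]
  have hbs : ∀ i j, L (b (i+1) (j+1)) = L (b i j) := fun i j => Lshift _ _ fun n => by
    rw [hb, hb, show n + (i+1) = n+1+i by ring, show n + (j+1) = n+1+j by ring]
  have hba : ∀ i j, L (b i j) = L (a i j) := by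
    intro i j
    apply le_antisymm
    · refine Lmono _ _ fun n => ?_
      rw [ha, hb]
      exact pow_le_pow_left₀ dist_nonneg (hyx _ _) 2
    · rw [← has]
      refine Lmono _ _ fun n => ?_
      rw [ha, hb]
      exact pow_le_pow_left₀ dist_nonneg (hxy _ _) 2
  have has' : ∀ i k, L (a i (i+k)) = L (a 0 k) := by
    intro i k
    induction i with
    | zero => rw [zero_add]
    | succ i ih => rw [← ih, ← has i (i+k), add_right_comm i 1 k]
  -- quadrilateral inequality
  have Q : ∀ i j r s p q : ℕ, 0 < p → 0 < q →
      L (c i (j+s)) + L (c (i+r) j) ≤ L (c i j) + L (c (i+r) (j+s))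
        + (q/p : ℝ) * L (a 0 r) + (p/q : ℝ) * L (a 0 s) := by
    intro i j r s p q hp hq
    have := Lmono (c i (j+s) + c (i+r) j)
      (c i j + c (i+r) (j+s) + (q/p : ℝ) • a i (i+r) + (p/q : ℝ) • b j (j+s)) (fun n => by
        simp only [BoundedContinuousFunction.coe_add, BoundedContinuousFunction.coe_smul,
          Pi.add_apply, smul_eq_mul, hc, ha, hb]
        exact quad_two G hX _ _ _ _ p q hp hq)
    simp only [map_add, map_smul, smul_eq_mul, hba, has'] at this
    exact this
  -- (P2) inequality
  have P : ∀ k : ℕ, 4 * L (a 0 k) ≤ L (c 0 k) + L (c k 0) + L (c (k+1) 0) + L (c 1 k)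
      - 2 * L (c 0 0) - 2 * L (c 1 0) := by
    intro k
    have := Lmono ((2:ℝ) • b 0 k + (2:ℝ) • a 1 (1+k) + c 0 0 + c k k + c 1 0 + c (1+k) (0+k))
      (c 0 k + c k 0 + c (k+1) 0 + c 1 k) (fun n => by
        simp only [BoundedContinuousFunction.coe_add, BoundedContinuousFunction.coe_smul,
          Pi.add_apply, smul_eq_mul, hc, ha, hb]
        have e1 := h₁ (x n) (x (n+k))
        have e2 := h₂ (y n) (y (n+k))
        simp only [hy, hx] at e1 e2
        rw [dist_comm (y n), dist_comm (y (n+k)), dist_comm (y n), dist_comm (y (n+k))] at e2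
        simp only [add_zero, zero_add, ← add_assoc, add_right_comm n 1 k] at e1 e2 ⊢
        linarith)
    simp only [map_add, map_smul, smul_eq_mul, hba, has', hFs'] at this
    have e := hFs' k 0 0
    rw [zero_add] at e
    linarith
  set A : ℕ → ℝ := fun k => L (a 0 k) with hA
  set D : ℕ → ℝ := fun k => L (c 0 k) + L (c (k+1) 0) with hD
  set ξ : ℝ := A 1 with hξ
  have D1 : D 1 - D 0 ≤ 4 * ξ := by
    have q1 := Q 0 0 1 1 1 1 one_pos one_pos
    have q2 := Q 1 0 1 1 1 1 one_pos one_pos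
    have s1 := hFs 0 0
    have s2 := hFs 1 0
    simp only [hD, hξ, hA]
    norm_num at q1 q2 s1 s2 ⊢
    linarith
  have D2 : ∀ k, D (k+2) - D (k+1) ≤ D (k+1) - D k + 4 * ξ := by
    intro k
    have q1 := Q 0 (k+1) 1 1 1 1 one_pos one_pos
    have q2 := Q (k+2) 0 1 1 1 1 one_pos one_pos
    have s1 := hFs 0 k
    have s2 := hFs 0 (k+1)
    have s3 := hFs (k+1) 0
    have s4 := hFs (k+2) 0
    simp only [hD, hξ, hA]
    norm_num [add_assoc] at q1 q2 s1 s2 s3 s4 ⊢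
    linarith
  have D3 : ∀ k : ℕ, D (k+1) - D k ≤ 4 * (k+1) * ξ := by
    intro k
    induction k with
    | zero => simpa using D1
    | succ k ih =>
      have := D2 k
      push_cast
      linarith
  have D4 : ∀ k : ℕ, D k - D 0 ≤ 2 * k * (k+1) * ξ := by
    intro k
    induction k with
    | zero => simp
    | succ k ih =>
      have := D3 k
      push_cast
      linarith
  have P' : ∀ k : ℕ, 4 * A (k+1) ≤ D (k+1) + D k - 2 * D 0 := by
    intro k
    have p := P (k+1)
    have s1 := hFs 0 k
    simp only [hD, hA]
    norm_num at p s1 ⊢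
    linarith
  have Aup : ∀ k : ℕ, A (k+1) ≤ (k+1)^2 * ξ := by
    intro k
    induction k with
    | zero => simp [hξ]
    | succ k ih =>
      have hk : (0:ℝ) < (k:ℝ) + 1 := by positivity
      have := Lmono (a 0 (k+1+1)) ((1 + 1/((k:ℝ)+1)) • a 0 (k+1) + (1 + ((k:ℝ)+1)) • a (k+1) (k+1+1))
        (fun n => by
          simp only [BoundedContinuousFunction.coe_add, BoundedContinuousFunction.coe_smul,
            Pi.add_apply, smul_eq_mul, ha]
          have t := dist_triangle (x (n+0)) (x (n+(k+1))) (x (n+(k+1+1)))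
          have t0 := dist_nonneg (x := x (n+0)) (y := x (n+(k+1+1)))
          generalize dist (x (n+0)) (x (n+(k+1+1))) = d0 at *
          generalize dist (x (n+0)) (x (n+(k+1))) = d1 at *
          generalize dist (x (n+(k+1))) (x (n+(k+1+1))) = d2 at *
          have e : (1 + 1/((k:ℝ)+1)) * d1^2 + (1 + ((k:ℝ)+1)) * d2^2
            = (d1+d2)^2 + (d1 - (k+1)*d2)^2/(k+1) := by
            field_simp
            ring
          rw [e]
          have : 0 ≤ (d1 - (k+1)*d2)^2/((k:ℝ)+1) := by positivity
          have : d0^2 ≤ (d1+d2)^2 := pow_le_pow_left₀ t0 t 2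
          linarith)
      simp only [map_add, map_smul, smul_eq_mul, has'] at this
      have h3 : (1 + 1/((k:ℝ)+1)) * A (k+1) ≤ (1 + 1/((k:ℝ)+1)) * ((k+1)^2 * ξ) := by gcongr
      have h4 : (1 + 1/((k:ℝ)+1)) * ((k+1)^2 * ξ) + (1 + ((k:ℝ)+1)) * ξ = (k+1+1)^2 * ξ := by
        field_simp
        ring
      push_cast
      simp only [hA, hξ] at *
      linarith
  have Alow : ∀ k : ℕ, (k+1)^2 * ξ ≤ A (k+1) := by
    intro k
    induction k with
    | zero => simp [hξ]
    | succ k ih =>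
      have hk : (0:ℝ) < (k:ℝ) + 1 := by positivity
      have p := P' k
      have d := D4 k
      have hup := Aup k
      have q := Q 1 0 (k+1) (k+1+1) (k+1) (k+1+1) (by omega) (by omega)
      have s1 := hFs 0 (k+1)
      have s2 := hFs' (k+1+1) 0 0
      have q' : D (k+1) ≤ D 0 + (((k:ℝ)+1+1)/(k+1)) * A (k+1)
          + (((k:ℝ)+1)/(k+1+1)) * A (k+1+1) := by
        simp only [hD, hA]
        rw [add_comm 1 (k+1)] at q
        push_cast at q
        norm_num at q s1 s2 ⊢
        linarith
      have h3 : (((k:ℝ)+1+1)/(k+1)) * A (k+1) ≤ (((k:ℝ)+1+1)/(k+1)) * ((k+1)^2*ξ) := by gcongr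
      have h4 : (((k:ℝ)+1+1)/(k+1)) * ((k+1)^2*ξ) = (k+1+1)*(k+1)*ξ := by field_simp
      have h5 : (k+1)*(k+1+1)*ξ ≤ (((k:ℝ)+1)/(k+1+1)) * A (k+1+1) := by linarith
      rw [div_mul_eq_mul_div, le_div_iff₀ (by positivity)] at h5
      push_cast
      have h6 : ((k:ℝ)+1) * ((k+1+1)^2*ξ) ≤ (k+1) * A (k+1+1) := by linarith
      exact le_of_mul_le_mul_left h6 hk
  have Abd : ∀ k, A k ≤ M^2 := by
    intro k
    obtain ⟨g, hg⟩ := mk (fun _ => M) (fun _ => ⟨hM0, le_rfl⟩)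
    rw [← Lconst g (M^2) hg]
    refine Lmono _ _ fun n => ?_
    rw [ha, hg]
    exact pow_le_pow_left₀ dist_nonneg (bxx _ _) 2
  have hξ0 : ξ ≤ 0 := by
    by_contra! hpos
    obtain ⟨k, hk⟩ := exists_nat_gt (M^2/ξ)
    rw [div_lt_iff₀ hpos] at hk
    have := Alow k
    have := Abd (k+1)
    have : (k:ℝ) * ξ ≤ (k+1)^2*ξ := by
      gcongr
      nlinarith [Nat.cast_nonneg (α := ℝ) k]
    linarith
  have hanti : Antitone (fun n => dist (x n) (x (n+1))) :=
    antitone_nat_of_succ_le fun n => (hxy n (n+1)).trans (hyx n (n+1))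
  have hbdd : BddBelow (Set.range fun n => dist (x n) (x (n+1))) :=
    ⟨0, by rintro _ ⟨n, rfl⟩; exact dist_nonneg⟩
  have hlim := tendsto_atTop_ciInf hanti hbdd
  set l := ⨅ n, dist (x n) (x (n+1)) with hl
  have hl0 : 0 ≤ l := ge_of_tendsto' hlim fun n => dist_nonneg
  have hll : ∀ n, l ≤ dist (x n) (x (n+1)) := fun n => ciInf_le hbdd n
  obtain ⟨g, hg⟩ := mk (fun _ => l) (fun n => ⟨hl0, (hll n).trans (bxx _ _)⟩)
  have hlξ : l^2 ≤ ξ := by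
    rw [← Lconst g (l^2) hg]
    refine Lmono _ _ fun n => ?_
    rw [ha, hg]
    exact pow_le_pow_left₀ hl0 (hll n) 2
  have : l = 0 := by
    have : l^2 = 0 := le_antisymm (hlξ.trans hξ0) (sq_nonneg _)
    exact pow_eq_zero_iff (two_ne_zero) |>.1 this
  rw [this] at hlim
  exact hlim

/-- Asymptotic regularity of the inexact alternating iteration of two mappings with
property (P₂) whose composition has a fixed point, in a CAT(0) space. -/
theorem two_maps_asymptotically_regular {X : Type*} [MetricSpace X]
    (G : Geodesic X) (hX : CAT0 X)
    (T₁ T₂ : X → X) (h₁ : PropP2 T₁) (h₂ : PropP2 T₂)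
    (hfix : ∃ u : X, T₂ (T₁ u) = u)
    (ε δ : ℕ → ℝ) (hsumε : Summable ε) (hsumδ : Summable δ)
    (x₀ : X) (x y : ℕ → X) (hx0 : x 0 = x₀)
    (hy : ∀ n : ℕ, dist (y n) (T₁ (x n)) ≤ ε n)
    (hx : ∀ n : ℕ, dist (x (n + 1)) (T₂ (y n)) ≤ δ n) :
    Filter.Tendsto (fun n => dist (x n) (x (n + 1))) Filter.atTop (nhds 0) ∧
    Filter.Tendsto (fun n => dist (y n) (y (n + 1))) Filter.atTop (nhds 0) := by
  obtain ⟨u, hu⟩ := hfix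
  have n1 := p2_nonexp G hX T₁ h₁
  have n2 := p2_nonexp G hX T₂ h₂
  have hε0 : ∀ n, 0 ≤ ε n := fun n => dist_nonneg.trans (hy n)
  have hδ0 : ∀ n, 0 ≤ δ n := fun n => dist_nonneg.trans (hx n)
  have hs : Summable (fun n => ε n + δ n) := hsumε.add hsumδ
  have hX0 : Tendsto (fun n => dist (x n) (x (n + 1))) atTop (𝓝 0) := by
    have tail := tendsto_sum_nat_add (fun n => ε n + δ n)
    rw [Metric.tendsto_atTop]
    intro e he
    obtain ⟨N, hN⟩ := (tail.eventually (gt_mem_nhds (show (0:ℝ) < e/4 by linarith))).exists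
    set z : ℕ → X := fun m => (fun p => T₂ (T₁ p))^[m] (x N) with hz
    have hzs : ∀ m, T₂ (T₁ (z m)) = z (m+1) := fun m => by
      simp only [hz, Function.iterate_succ_apply']
    have hreg := exact_regular G hX T₁ T₂ h₁ h₂ u hu z (fun m => T₁ (z m)) (fun _ => rfl) hzs
    have hd : ∀ m, dist (x (m+N)) (z m) ≤ ∑ k ∈ Finset.range m, (ε (k+N) + δ (k+N)) := by
      intro m
      induction m with
      | zero => simp [hz]
      | succ m ih =>
        rw [Finset.sum_range_succ, ← hzs m, add_right_comm]
        have t1 := dist_triangle (x (m+N+1)) (T₂ (y (m+N))) (T₂ (T₁ (z m)))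
        have t2 := n2 (y (m+N)) (T₁ (z m))
        have t3 := dist_triangle (y (m+N)) (T₁ (x (m+N))) (T₁ (z m))
        have t4 := n1 (x (m+N)) (z m)
        linarith [hx (m+N), hy (m+N)]
    have hd' : ∀ m, dist (x (m+N)) (z m) < e/4 := fun m => by
      refine ((hd m).trans ?_).trans_lt hN
      exact ((summable_nat_add_iff N).2 hs).sum_le_tsum _
        (fun k _ => add_nonneg (hε0 _) (hδ0 _))
    obtain ⟨K, hK⟩ := (Metric.tendsto_atTop.1 hreg) (e/4) (by linarith)
    refine ⟨K + N, fun n hn => ?_⟩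
    obtain ⟨m, rfl⟩ : ∃ m, n = m + N := ⟨n - N, by omega⟩
    have hk := hK m (by omega)
    rw [Real.dist_0_eq_abs, abs_of_nonneg dist_nonneg] at hk ⊢
    have a1 := hd' m
    have a2 := hd' (m+1)
    rw [add_right_comm] at a2
    have t := dist_triangle4 (x (m+N)) (z m) (z (m+1)) (x (m+N+1))
    rw [dist_comm (z (m+1))] at t
    linarith
  refine ⟨hX0, ?_⟩
  have hε := hsumε.tendsto_atTop_zero
  have hlim : Tendsto (fun n => ε n + dist (x n) (x (n+1)) + ε (n+1)) atTop (𝓝 0) := by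
    simpa using (hε.add hX0).add (hε.comp (tendsto_add_atTop_nat 1))
  refine squeeze_zero (fun n => dist_nonneg) (fun n => ?_) hlim
  have t := dist_triangle4 (y n) (T₁ (x n)) (T₁ (x (n+1))) (y (n+1))
  rw [dist_comm (T₁ (x (n+1)))] at t
  linarith [hy n, hy (n+1), n1 (x n) (x (n+1))]
end

section
/- Let X be a complete CAT(0) space and C₁, …, C_r ⊆ X nonempty closed convex sets with ⋂ C_i ≠ ∅. Starting from any x₀, the cyclic projection sequence x_{n+1} = P_{C_{n(mod r)+1}}(x_n) Δ-converges to some point of ⋂_{i=1}^r C_i; if some C_i is locally compact, the convergence is strong. -/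
open Filter Topology Metric Set

/-- `u` is an asymptotic center of the sequence `s`: it minimizes `y ↦ limsup dist y (s n)`. -/
def IsAsymptoticCenter {X : Type*} [MetricSpace X] (s : ℕ → X) (u : X) : Prop :=
  ∀ y : X, Filter.limsup (fun n => dist u (s n)) Filter.atTop ≤
    Filter.limsup (fun n => dist y (s n)) Filter.atTop

/-- `s` Δ-converges to `u`: `u` is the unique asymptotic center of every subsequence. -/
def DeltaConvergesTo {X : Type*} [MetricSpace X] (s : ℕ → X) (u : X) : Prop :=
  ∀ φ : ℕ → ℕ, StrictMono φ →
    IsAsymptoticCenter (s ∘ φ) u ∧ ∀ v : X, IsAsymptoticCenter (s ∘ φ) v → v = u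

section Helpers

variable {X : Type*} [MetricSpace X]

/-- asymptotic radius function -/
noncomputable def asR (s : ℕ → X) (y : X) : ℝ := Filter.limsup (fun n => dist y (s n)) Filter.atTop

/-- bounded sequence -/
def BddS (s : ℕ → X) : Prop := ∃ c : X, ∃ B : ℝ, ∀ n, dist c (s n) ≤ B

lemma BddS.le {s : ℕ → X} (h : BddS s) (y : X) : ∃ B : ℝ, ∀ n, dist y (s n) ≤ B := by
  obtain ⟨c, B, hB⟩ := h
  exact ⟨dist y c + B, fun n => (dist_triangle y c (s n)).trans (by linarith [hB n])⟩

lemma asR_ev {s : ℕ → X} (h : BddS s) {y : X} {a : ℝ} (ha : asR s y < a) :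
    ∀ᶠ n in atTop, dist y (s n) < a := by
  obtain ⟨B, hB⟩ := h.le y
  exact eventually_lt_of_limsup_lt ha (isBoundedUnder_of ⟨B, hB⟩)

lemma asR_le {s : ℕ → X} {y : X} {a : ℝ} (ha : ∀ᶠ n in atTop, dist y (s n) ≤ a) :
    asR s y ≤ a := by
  refine limsup_le_of_le ?_ ha
  exact (isBoundedUnder_of ⟨0, fun n => dist_nonneg⟩ :
    IsBoundedUnder (· ≥ ·) atTop (fun n => dist y (s n))).isCoboundedUnder_le

lemma asR_nonneg {s : ℕ → X} (h : BddS s) (y : X) : 0 ≤ asR s y := by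
  by_contra hlt
  push Not at hlt
  obtain ⟨n, hn⟩ := (asR_ev h hlt).exists
  exact absurd hn (not_lt.mpr dist_nonneg)

lemma asR_lip {s : ℕ → X} (h : BddS s) (y z : X) : asR s y ≤ asR s z + dist y z := by
  refine le_of_forall_pos_le_add fun ε hε => asR_le ?_
  filter_upwards [asR_ev h (lt_add_of_pos_right (asR s z) hε)] with n hn
  linarith [dist_triangle y z (s n)]

lemma asR_cn (hX : CAT0 X) {s : ℕ → X} (h : BddS s) {a b m : X}
    (h1 : dist a m = dist a b / 2) (h2 : dist b m = dist a b / 2) :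
    asR s m ^ 2 ≤ asR s a ^ 2 / 2 + asR s b ^ 2 / 2 - dist a b ^ 2 / 4 := by
  have key : ∀ ε > 0, asR s m ^ 2 ≤
      (asR s a + ε) ^ 2 / 2 + (asR s b + ε) ^ 2 / 2 - dist a b ^ 2 / 4 := by
    intro ε hε
    set Q := (asR s a + ε) ^ 2 / 2 + (asR s b + ε) ^ 2 / 2 - dist a b ^ 2 / 4 with hQ
    have ev : ∀ᶠ n in atTop, dist m (s n) ^ 2 ≤ Q := by
      filter_upwards [asR_ev h (lt_add_of_pos_right (asR s a) hε),
        asR_ev h (lt_add_of_pos_right (asR s b) hε)] with n ha hb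
      have := hX a b (s n) m h1 h2
      rw [dist_comm (s n) m, dist_comm (s n) a, dist_comm (s n) b] at this
      have e1 : dist a (s n) ^ 2 ≤ (asR s a + ε) ^ 2 := pow_le_pow_left₀ dist_nonneg ha.le 2
      have e2 : dist b (s n) ^ 2 ≤ (asR s b + ε) ^ 2 := pow_le_pow_left₀ dist_nonneg hb.le 2
      rw [hQ]; linarith
    have hQ0 : 0 ≤ Q := by
      obtain ⟨n, hn⟩ := ev.exists
      exact (sq_nonneg _).trans hn
    have : asR s m ≤ Real.sqrt Q := asR_le (ev.mono fun n hn => Real.le_sqrt_of_sq_le hn)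
    calc asR s m ^ 2 ≤ Real.sqrt Q ^ 2 := pow_le_pow_left₀ (asR_nonneg h m) this 2
      _ = Q := Real.sq_sqrt hQ0
  have ht : Tendsto (fun ε : ℝ => (asR s a + ε) ^ 2 / 2 + (asR s b + ε) ^ 2 / 2 - dist a b ^ 2 / 4)
      (𝓝[>] 0) (𝓝 ((asR s a + 0) ^ 2 / 2 + (asR s b + 0) ^ 2 / 2 - dist a b ^ 2 / 4)) :=
    tendsto_nhdsWithin_of_tendsto_nhds (Continuous.tendsto (by fun_prop) 0)
  simp only [add_zero] at ht
  refine ge_of_tendsto ht ?_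
  filter_upwards [self_mem_nhdsWithin] with ε hε using key ε hε

lemma geo_mid (G : Geodesic X) (a b : X) :
    ∃ m, dist a m = dist a b / 2 ∧ dist b m = dist a b / 2 := by
  refine ⟨G.geo a b (1/2), ?_, ?_⟩
  · have := G.geo_dist a b 0 (by simp) (1/2) (by constructor <;> norm_num)
    rw [G.geo_zero] at this
    rw [this]; norm_num [abs_of_pos]; ring
  · have := G.geo_dist a b 1 (by simp) (1/2) (by constructor <;> norm_num)
    rw [G.geo_one] at this
    rw [this]; norm_num [abs_of_pos]; ring

lemma ac_unique (G : Geodesic X) (hX : CAT0 X) {s : ℕ → X} (h : BddS s) {u v : X}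
    (hu : IsAsymptoticCenter s u) (hv : asR s v ≤ asR s u) : v = u := by
  obtain ⟨m, h1, h2⟩ := geo_mid G v u
  have cn := asR_cn hX h h1 h2
  have hm : asR s u ≤ asR s m := hu m
  have e1 := pow_le_pow_left₀ (asR_nonneg h u) hm 2
  have e2 := pow_le_pow_left₀ (asR_nonneg h v) hv 2
  have : dist v u ^ 2 ≤ 0 := by linarith
  have : dist v u = 0 := by
    have := le_antisymm this (sq_nonneg _)
    exact pow_eq_zero_iff (two_ne_zero) |>.mp this
  exact dist_eq_zero.mp this

lemma ac_exists [CompleteSpace X] (G : Geodesic X) (hX : CAT0 X) {s : ℕ → X} (h : BddS s) :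
    ∃ u, IsAsymptoticCenter s u := by
  have : Nonempty X := ⟨s 0⟩
  set ρ := ⨅ y, asR s y with hρ
  have hbdd : BddBelow (range (asR s)) := ⟨0, by rintro _ ⟨y, rfl⟩; exact asR_nonneg h y⟩
  have hle : ∀ y, ρ ≤ asR s y := fun y => ciInf_le hbdd y
  have hρ0 : 0 ≤ ρ := le_ciInf (asR_nonneg h)
  have hex : ∀ n : ℕ, ∃ y, asR s y < ρ + 1 / ((n:ℝ) + 1) := fun n =>
    exists_lt_of_ciInf_lt (lt_add_of_pos_right ρ (by positivity))
  choose y hy using hex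
  have t0 : Tendsto (fun n : ℕ => 1 / ((n:ℝ) + 1)) atTop (𝓝 0) :=
    tendsto_one_div_add_atTop_nhds_zero_nat
  have hc : CauchySeq y := by
    refine cauchySeq_of_le_tendsto_0
      (fun N : ℕ => Real.sqrt (4 * ((ρ + 1 / ((N:ℝ) + 1)) ^ 2 - ρ ^ 2))) ?_ ?_
    · intro n m N hn hm
      apply Real.le_sqrt_of_sq_le
      obtain ⟨w, h1, h2⟩ := geo_mid G (y n) (y m)
      have cn := asR_cn hX h h1 h2
      have hw := pow_le_pow_left₀ hρ0 (hle w) 2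
      have hh : ∀ k, N ≤ k → asR s (y k) ^ 2 ≤ (ρ + 1 / ((N:ℝ) + 1)) ^ 2 := by
        intro k hk
        refine pow_le_pow_left₀ (asR_nonneg h _) ((hy k).le.trans ?_) 2
        have : (N:ℝ) ≤ k := by exact_mod_cast hk
        gcongr
      linarith [hh n hn, hh m hm]
    · have : Tendsto (fun N : ℕ => Real.sqrt (4 * ((ρ + 1 / ((N:ℝ) + 1)) ^ 2 - ρ ^ 2))) atTop
          (𝓝 (Real.sqrt (4 * ((ρ + 0) ^ 2 - ρ ^ 2)))) :=
        (((((t0.const_add ρ).pow 2).sub_const _).const_mul 4)).sqrt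
      simpa using this
  obtain ⟨u, hu⟩ := cauchySeq_tendsto_of_complete hc
  refine ⟨u, fun z => ?_⟩
  change asR s u ≤ asR s z
  refine le_trans ?_ (hle z)
  have t1 : Tendsto (fun n : ℕ => (ρ + 1 / ((n:ℝ) + 1)) + dist u (y n)) atTop
      (𝓝 (ρ + 0 + dist u u)) := (t0.const_add ρ).add (tendsto_const_nhds.dist hu)
  simp only [dist_self, add_zero] at t1
  refine ge_of_tendsto' t1 fun n => ?_
  linarith [asR_lip h u (y n), hy n]

/-- Projection inequality. -/
lemma proj_ineq (G : Geodesic X) (hX : CAT0 X) {C : Set X}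
    (hconv : ∀ x ∈ C, ∀ y ∈ C, ∀ t ∈ Set.Icc (0:ℝ) 1, G.geo x y t ∈ C)
    {x p c : X} (hp : p ∈ C) (hmin : ∀ z ∈ C, dist x p ≤ dist x z) (hc : c ∈ C) :
    dist p c ^ 2 + dist x p ^ 2 ≤ dist x c ^ 2 := by
  have hI : ∀ k : ℕ, ((1:ℝ)/2) ^ k ∈ Set.Icc (0:ℝ) 1 := fun k =>
    ⟨by positivity, pow_le_one₀ (by norm_num) (by norm_num)⟩
  have d0 : ∀ k : ℕ, dist p (G.geo p c ((1/2) ^ k)) = (1/2) ^ k * dist p c := by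
    intro k
    have := G.geo_dist p c 0 (by simp) _ (hI k)
    rw [G.geo_zero, zero_sub, abs_neg, abs_of_nonneg (hI k).1] at this
    exact this
  have key : ∀ k : ℕ, dist x (G.geo p c ((1/2) ^ k)) ^ 2 ≤
      (1 - (1/2) ^ k) * dist x p ^ 2 + (1/2) ^ k * dist x c ^ 2
        - (1/2) ^ k * (1 - (1/2) ^ k) * dist p c ^ 2 := by
    intro k
    induction k with
    | zero => simp [G.geo_one]
    | succ k ih =>
      have cn := hX p (G.geo p c ((1/2) ^ k)) x (G.geo p c ((1/2) ^ (k+1)))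
        (by rw [d0, d0, pow_succ]; ring)
        (by
          rw [G.geo_dist p c _ (hI k) _ (hI (k+1)), d0, pow_succ]
          have : ((1:ℝ)/2)^k - (1/2)^k * (1/2) = (1/2)^k * (1/2) := by ring
          rw [this, abs_of_nonneg (by positivity)]; ring)
      rw [d0] at cn
      have e : ((1:ℝ)/2) ^ (k+1) = (1/2) ^ k * (1/2) := pow_succ _ _
      refine cn.trans ?_
      rw [e]
      generalize ((1:ℝ)/2) ^ k = q at ih ⊢
      generalize dist x (G.geo p c q) ^ 2 = A at ih ⊢
      linarith
  have key2 : ∀ k : ℕ, 0 ≤ dist x c ^ 2 - dist x p ^ 2 - (1 - (1/2) ^ k) * dist p c ^ 2 := by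
    intro k
    have h1 := pow_le_pow_left₀ dist_nonneg (hmin _ (hconv p hp c hc _ (hI k))) 2
    have h2 := key k
    have hpos : (0:ℝ) < (1/2) ^ k := by positivity
    refine nonneg_of_mul_nonneg_right ?_ hpos
    nlinarith
  have t : Tendsto (fun k : ℕ => dist x c ^ 2 - dist x p ^ 2 - (1 - ((1:ℝ)/2) ^ k) * dist p c ^ 2)
      atTop (𝓝 (dist x c ^ 2 - dist x p ^ 2 - (1 - 0) * dist p c ^ 2)) :=
    (((tendsto_pow_atTop_nhds_zero_of_lt_one (by norm_num) (by norm_num)).const_sub 1).mul_const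
      _).const_sub _
  have := ge_of_tendsto' t key2
  linarith

lemma le_of_sq_le_sq_aux {a b : ℝ} (h : a ^ 2 ≤ b ^ 2) (hb : 0 ≤ b) : a ≤ b :=
  le_trans (le_abs_self a) (abs_le_of_sq_le_sq h hb)

end Helpers

/-- Δ-convergence of the cyclic projection method for finitely many nonempty closed convex
sets with nonempty intersection in a complete CAT(0) space, with strong convergence when
one of the sets is locally compact. -/
theorem cyclic_projection_converges {X : Type*} [MetricSpace X] [CompleteSpace X]
    (G : Geodesic X) (hX : CAT0 X)
    {r : ℕ} (hr : 0 < r) (C : Fin r → Set X)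
    (hne : ∀ i, (C i).Nonempty) (hcl : ∀ i, IsClosed (C i))
    (hconv : ∀ i, ∀ x ∈ C i, ∀ y ∈ C i, ∀ t ∈ Set.Icc (0:ℝ) 1, G.geo x y t ∈ C i)
    (hint : (⋂ i, C i).Nonempty)
    (P : Fin r → X → X)
    (hP : ∀ i, ∀ x : X, P i x ∈ C i ∧ ∀ z ∈ C i, dist x (P i x) ≤ dist x z)
    (x₀ : X) (x : ℕ → X) (hx0 : x 0 = x₀)
    (hx : ∀ n : ℕ, x (n + 1) = P ⟨n % r, Nat.mod_lt n hr⟩ (x n)) :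
    ∃ u ∈ ⋂ i, C i, DeltaConvergesTo x u ∧
      ((∃ i, LocallyCompactSpace (C i)) → Filter.Tendsto x Filter.atTop (nhds u)) := by
  have hmem : ∀ n, x (n + 1) ∈ C ⟨n % r, Nat.mod_lt n hr⟩ := fun n => by
    rw [hx]; exact (hP _ _).1
  have hfej : ∀ c ∈ ⋂ i, C i, ∀ n,
      dist (x (n+1)) c ^ 2 + dist (x n) (x (n+1)) ^ 2 ≤ dist (x n) c ^ 2 := by
    intro c hc n
    rw [hx n]
    exact proj_ineq G hX (hconv _) (hP _ _).1 (hP _ _).2 (mem_iInter.mp hc _)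
  have hanti : ∀ c ∈ ⋂ i, C i, Antitone fun n => dist c (x n) := by
    intro c hc
    refine antitone_nat_of_succ_le fun n => ?_
    rw [dist_comm c, dist_comm c]
    refine le_of_sq_le_sq_aux ?_ dist_nonneg
    nlinarith [hfej c hc n, sq_nonneg (dist (x n) (x (n+1)))]
  have hlim : ∀ c ∈ ⋂ i, C i, ∃ L, Tendsto (fun n => dist c (x n)) atTop (𝓝 L) := fun c hc =>
    ⟨_, tendsto_atTop_ciInf (hanti c hc) ⟨0, by rintro _ ⟨n, rfl⟩; exact dist_nonneg⟩⟩
  obtain ⟨c₀, hc₀⟩ := hint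
  have hb : ∀ φ : ℕ → ℕ, BddS (x ∘ φ) := fun φ =>
    ⟨c₀, dist c₀ (x 0), fun n => hanti c₀ hc₀ (Nat.zero_le _)⟩
  have hstep : Tendsto (fun n => dist (x n) (x (n+1))) atTop (𝓝 0) := by
    obtain ⟨L, hL⟩ := hlim c₀ hc₀
    have t : Tendsto (fun n => Real.sqrt (dist c₀ (x n) ^ 2 - dist c₀ (x (n+1)) ^ 2)) atTop
        (𝓝 (Real.sqrt (L ^ 2 - L ^ 2))) :=
      ((hL.pow 2).sub ((hL.comp (tendsto_add_atTop_nat 1)).pow 2)).sqrt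
    rw [sub_self, Real.sqrt_zero] at t
    refine squeeze_zero (fun _ => dist_nonneg) (fun n => ?_) t
    apply Real.le_sqrt_of_sq_le
    have := hfej c₀ hc₀ n
    rw [dist_comm _ c₀, dist_comm _ c₀] at this
    linarith
  have hS : Tendsto (fun n => ∑ l ∈ Finset.range r, dist (x (n + l)) (x (n + l + 1))) atTop (𝓝 0) := by
    have := tendsto_finsetSum (Finset.range r) (f := fun l n => dist (x (n + l)) (x (n + l + 1)))
      (x := atTop) (a := fun _ => (0:ℝ)) (fun l _ => hstep.comp (tendsto_add_atTop_nat l))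
    simpa using this
  have hnear : ∀ i : Fin r, ∀ n, ∃ y ∈ C i,
      dist (x n) y ≤ ∑ l ∈ Finset.range r, dist (x (n + l)) (x (n + l + 1)) := by
    intro i n
    have hj : ∃ j, j < r ∧ (n + j) % r = i := by
      have h1 := Nat.mod_lt n hr
      have h2 := i.2
      rcases le_or_gt (n % r) i with h | h
      · refine ⟨i - n % r, by omega, ?_⟩
        rw [Nat.add_mod, Nat.mod_eq_of_lt (show (i:ℕ) - n % r < r by omega),
          show n % r + ((i:ℕ) - n % r) = i by omega, Nat.mod_eq_of_lt h2]
      · refine ⟨i + r - n % r, by omega, ?_⟩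
        rw [Nat.add_mod, Nat.mod_eq_of_lt (show (i:ℕ) + r - n % r < r by omega),
          show n % r + ((i:ℕ) + r - n % r) = i + r by omega, Nat.add_mod_right,
          Nat.mod_eq_of_lt h2]
    obtain ⟨j, hjr, hji⟩ := hj
    refine ⟨x (n + j + 1), ?_, ?_⟩
    · have := hmem (n + j)
      have e : (⟨(n + j) % r, Nat.mod_lt _ hr⟩ : Fin r) = i := Fin.ext hji
      rwa [e] at this
    · have h1 := dist_le_range_sum_dist (fun l => x (n + l)) (j + 1)
      simp only [add_zero, ← add_assoc] at h1
      refine h1.trans (Finset.sum_le_sum_of_subset_of_nonneg ?_ fun _ _ _ => dist_nonneg)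
      exact Finset.range_mono hjr
  have hAC : ∀ φ : ℕ → ℕ, StrictMono φ → ∃ v ∈ ⋂ i, C i, IsAsymptoticCenter (x ∘ φ) v := by
    intro φ hφ
    obtain ⟨v, hv⟩ := ac_exists G hX (hb φ)
    refine ⟨v, mem_iInter.mpr fun i => ?_, hv⟩
    suffices P i v = v by rw [← this]; exact (hP i v).1
    refine ac_unique G hX (hb φ) hv ?_
    refine le_of_forall_pos_le_add fun ε hε => asR_le ?_
    filter_upwards [asR_ev (hb φ) (show asR (x ∘ φ) v < asR (x ∘ φ) v + ε/2 by linarith),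
      (hS.comp hφ.tendsto_atTop).eventually (gt_mem_nhds (show (0:ℝ) < ε/4 by linarith))]
      with n h1 h2
    obtain ⟨y, hy, hd⟩ := hnear i (φ n)
    simp only [Function.comp] at h1 h2 ⊢
    have h3 : dist (P i v) y ≤ dist v y := by
      refine le_of_sq_le_sq_aux ?_ dist_nonneg
      nlinarith [proj_ineq G hX (hconv i) (hP i v).1 (hP i v).2 hy, sq_nonneg (dist v (P i v))]
    have h4 := dist_triangle (P i v) y (x (φ n))
    have h5 := dist_triangle v (x (φ n)) y
    rw [dist_comm y] at h4
    linarith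
  obtain ⟨u, huC, hu⟩ := hAC id strictMono_id
  obtain ⟨L, hL⟩ := hlim u huC
  have hac : ∀ φ : ℕ → ℕ, StrictMono φ → IsAsymptoticCenter (x ∘ φ) u := by
    intro φ hφ
    obtain ⟨v, hvC, hv⟩ := hAC φ hφ
    obtain ⟨M, hM⟩ := hlim v hvC
    have e1 : asR (x ∘ φ) u = L := (hL.comp hφ.tendsto_atTop).limsup_eq
    have e2 : asR (x ∘ φ) v = M := (hM.comp hφ.tendsto_atTop).limsup_eq
    have e3 : asR (x ∘ id) u = L := hL.limsup_eq
    have e4 : asR (x ∘ id) v = M := hM.limsup_eq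
    have h1 : asR (x ∘ id) u ≤ asR (x ∘ id) v := hu v
    have : u = v := ac_unique G hX (hb φ) hv (by rw [e1, e2, ← e3, ← e4]; exact h1)
    rw [this]; exact hv
  refine ⟨u, huC, fun φ hφ => ⟨hac φ hφ, fun v hv => ac_unique G hX (hb φ) (hac φ hφ) (hv u)⟩, ?_⟩
  rintro ⟨i, hi⟩
  have hL0 : 0 ≤ L := ge_of_tendsto' hL fun _ => dist_nonneg
  rcases hL0.eq_or_lt with h0 | hpos
  · rw [tendsto_iff_dist_tendsto_zero]
    rw [← h0] at hL
    simpa only [dist_comm] using hL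
  exfalso
  have huL : ∀ n, L ≤ dist u (x n) := fun n => (hanti u huC).le_of_tendsto hL n
  have hui : u ∈ C i := mem_iInter.mp huC i
  -- a compact neighbourhood
  obtain ⟨K, hK, hKn⟩ := exists_compact_mem_nhds (⟨u, hui⟩ : C i)
  obtain ⟨δ, hδ, hδK⟩ := Metric.mem_nhds_iff.mp hKn
  set ε := min (δ/2) L with hε
  have hε0 : 0 < ε := lt_min (by linarith) hpos
  have hεδ : ε < δ := (min_le_left _ _).trans_lt (by linarith)
  have hεL : ε ≤ L := min_le_right _ _
  set ψ : ℕ → ℕ := fun k => k * r + i + 1 with hψ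
  have hψm : StrictMono ψ := strictMono_nat_of_lt_succ fun k => by
    simp only [hψ]; nlinarith
  have hy : ∀ k, x (ψ k) ∈ C i := by
    intro k
    have := hmem (k * r + i)
    have e : (⟨(k * r + i) % r, Nat.mod_lt _ hr⟩ : Fin r) = i :=
      Fin.ext (by simp [Nat.mod_eq_of_lt i.2])
    rwa [e] at this
  have hD : ∀ k, 0 < dist u (x (ψ k)) := fun k => hpos.trans_le (huL _)
  have ht : ∀ k, ε / dist u (x (ψ k)) ∈ Set.Icc (0:ℝ) 1 := fun k =>
    ⟨div_nonneg hε0.le (hD k).le, (div_le_one (hD k)).mpr (hεL.trans (huL _))⟩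
  set z : ℕ → C i := fun k =>
    ⟨G.geo u (x (ψ k)) (ε / dist u (x (ψ k))), hconv i u hui _ (hy k) _ (ht k)⟩ with hz
  have hz1 : ∀ k, dist u (z k : X) = ε := by
    intro k
    have := G.geo_dist u (x (ψ k)) 0 (by simp) _ (ht k)
    rw [G.geo_zero, zero_sub, abs_neg, abs_of_nonneg (ht k).1, div_mul_cancel₀ _ (hD k).ne'] at this
    exact this
  have hz2 : ∀ k, dist (z k : X) (x (ψ k)) = dist u (x (ψ k)) - ε := by
    intro k
    have := G.geo_dist u (x (ψ k)) _ (ht k) 1 (by simp)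
    rw [G.geo_one, abs_sub_comm, abs_of_nonneg (by linarith [(ht k).2]), sub_mul,
      div_mul_cancel₀ _ (hD k).ne', one_mul] at this
    exact this
  have hzK : ∀ k, z k ∈ K := fun k => hδK (by
    rw [Metric.mem_ball, dist_comm]
    exact (hz1 k).trans_lt hεδ)
  obtain ⟨w, -, θ, hθ, hw⟩ := hK.tendsto_subseq hzK
  have hcomp := hψm.comp hθ
  have e1 : asR (x ∘ (ψ ∘ θ)) u = L := (hL.comp hcomp.tendsto_atTop).limsup_eq
  have h1 : asR (x ∘ (ψ ∘ θ)) u ≤ asR (x ∘ (ψ ∘ θ)) w := hac _ hcomp w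
  have h2 : asR (x ∘ (ψ ∘ θ)) w ≤ L - ε / 2 := by
    refine asR_le ?_
    have t1 := (hL.comp hcomp.tendsto_atTop).eventually
      (gt_mem_nhds (show L < L + ε/4 by linarith))
    have t2 := (Metric.tendsto_nhds.mp hw) (ε/4) (by linarith)
    filter_upwards [t1, t2] with k k1 k2
    simp only [Function.comp, Subtype.dist_eq] at k1 k2 ⊢
    have := dist_triangle (w : X) (z (θ k)) (x (ψ (θ k)))
    rw [hz2, dist_comm (w : X) (z (θ k) : X)] at this
    linarith
  linarith
end
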